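/- Let α be a type and A, B lists over α. Define operations on triples of lists by L_⊕(X,Y,Z) = (X, X⊕Y, Y) and R_⊕(X,Y,Z) = (Y, Y⊕Z, Z), and define a family of triples V(j) for j ≥ 2 by V(2) = (A, A⊕B, B), V(2j−1) = L_⊕(V(j)) and V(2j) = R_⊕(V(j)) for j ≥ 2. Then for every j ≥ 2, V(j) = ( S_{A,B}(a*(j−1)), S_{A,B}(j), S_{A,B}(a(j)) ); in particular, the central component of V(j) equals S_{A,B}(j). -/

import Mathlib

/-- Stern's diatomic sequence. -/
def stern : ℕ → ℕ
  | 0 => 0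
  | 1 => 1
  | n + 2 =>
    if (n + 2) % 2 = 0 then stern ((n + 2) / 2)
    else stern ((n + 2) / 2) + stern ((n + 2) / 2 + 1)
decreasing_by all_goals omega

/-- OEIS A003602: a(1)=1, a(2n)=a(n), a(2n+1)=n+1. (a(0)=0 as junk value.) -/
def aseq : ℕ → ℕ
  | 0 => 0
  | 1 => 1
  | n + 2 =>
    if (n + 2) % 2 = 0 then aseq ((n + 2) / 2)
    else (n + 2) / 2 + 1
decreasing_by all_goals omega

-- the modified sequence `a*`: zero at powers of two.
open Classical in
noncomputable def aStar (j : ℕ) : ℕ :=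
  if ∃ k, j = 2 ^ k then 0 else aseq j

theorem aseq_le (n : ℕ) : aseq n ≤ n := by
  induction n using Nat.strong_induction_on with
  | _ n ih =>
    match n with
    | 0 => simp [aseq]
    | 1 => simp [aseq]
    | m + 2 =>
      rw [aseq]
      split
      · exact le_trans (ih ((m + 2) / 2) (by omega)) (by omega)
      · omega

theorem aStar_le (j : ℕ) : aStar j ≤ j := by
  unfold aStar
  split
  · omega
  · exact aseq_le j

/-- The Markov-type sequence `S_{A,B}(n)`. -/
noncomputable def mseq {α : Type*} (A B : List α) : ℕ → List α
  | 0 => A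
  | 1 => B
  | 2 => A ++ B
  | n + 3 =>
    if (n + 3) % 2 = 0 then
      mseq A B ((n + 3) / 2) ++ mseq A B (aseq ((n + 3) / 2))
    else
      mseq A B (aStar ((n + 4) / 2 - 1)) ++ mseq A B ((n + 4) / 2)
decreasing_by
  all_goals first
    | omega
    | exact lt_of_le_of_lt (aseq_le _) (by omega)
    | exact lt_of_le_of_lt (aStar_le _) (by omega)

def Lop {α : Type*} (v : List α × List α × List α) : List α × List α × List α :=
  (v.1, v.1 ++ v.2.1, v.2.1)

def Rop {α : Type*} (v : List α × List α × List α) : List α × List α × List α :=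
  (v.2.1, v.2.1 ++ v.2.2, v.2.2)

/-- The family of triples `V(j)` generated from `(A, A ⊕ B, B)` by the `L`/`R` moves. -/
def Vtrip {α : Type*} (A B : List α) : ℕ → List α × List α × List α
  | 0 => ([], [], [])
  | 1 => ([], [], [])
  | 2 => (A, A ++ B, B)
  | n + 3 =>
    if (n + 3) % 2 = 0 then Rop (Vtrip A B ((n + 3) / 2))
    else Lop (Vtrip A B ((n + 4) / 2))
decreasing_by all_goals omega

theorem aseq_two_mul (n : ℕ) : aseq (2 * n) = aseq n := by
  obtain _ | n := n
  · rfl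
  · rw [show 2 * (n + 1) = 2 * n + 2 by ring, aseq, if_pos (by omega),
      show (2 * n + 2) / 2 = n + 1 by omega]

theorem aseq_two_mul_sub_one {j : ℕ} (hj : 1 ≤ j) : aseq (2 * j - 1) = j := by
  obtain rfl | ⟨m, rfl⟩ : j = 1 ∨ ∃ m, j = m + 2 :=
    hj.eq_or_lt'.imp_right Nat.exists_eq_add_of_le'
  · simp [aseq]
  · rw [show 2 * (m + 2) - 1 = 2 * m + 1 + 2 by omega, aseq, if_neg (by omega)]
    omega

theorem aStar_two_pow (k : ℕ) : aStar (2 ^ k) = 0 :=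
  if_pos ⟨k, rfl⟩

theorem aStar_eq_aseq {j : ℕ} (hj : ¬ ∃ k, j = 2 ^ k) : aStar j = aseq j :=
  if_neg hj

theorem aStar_two_mul (n : ℕ) : aStar (2 * n) = aStar n := by
  by_cases hn : ∃ k, n = 2 ^ k
  · obtain ⟨k, rfl⟩ := hn
    rw [← pow_succ', aStar_two_pow, aStar_two_pow]
  · have h2n : ¬ ∃ k, 2 * n = 2 ^ k := by
      rintro ⟨_ | k, hk⟩
      · omega
      · exact hn ⟨k, by rw [pow_succ'] at hk; omega⟩
    rw [aStar_eq_aseq h2n, aStar_eq_aseq hn, aseq_two_mul]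

theorem aStar_two_mul_sub_one {j : ℕ} (hj : 2 ≤ j) : aStar (2 * j - 1) = j := by
  have h_not_pow : ¬ ∃ k, 2 * j - 1 = 2 ^ k := by
    rintro ⟨_ | k, hk⟩
    · omega
    · rw [pow_succ'] at hk
      omega
  rw [aStar_eq_aseq h_not_pow, aseq_two_mul_sub_one (by omega)]

theorem two_le_doubling_induction {P : (j : ℕ) → 2 ≤ j → Prop} (two : P 2 le_rfl)
    (two_mul_sub_one : ∀ (j : ℕ) (hj : 2 ≤ j), P j hj → P (2 * j - 1) (by omega))
    (two_mul : ∀ (j : ℕ) (hj : 2 ≤ j), P j hj → P (2 * j) (by omega))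
    (j : ℕ) (hj : 2 ≤ j) : P j hj := by
  induction j using Nat.strong_induction_on with
  | _ j ih =>
    obtain rfl | hj3 := hj.eq_or_lt
    · exact two
    · obtain ⟨i, rfl | rfl⟩ := Nat.even_or_odd' j
      · exact two_mul i (by omega) (ih i (by omega) (by omega))
      · exact two_mul_sub_one (i + 1) (by omega) (ih (i + 1) (by omega) (by omega))

section Triples

variable {α : Type*} (A B : List α)

theorem mseq_two_mul {j : ℕ} (hj : 2 ≤ j) :
    mseq A B (2 * j) = mseq A B j ++ mseq A B (aseq j) := by
  obtain ⟨m, rfl⟩ := Nat.exists_eq_add_of_le' hj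
  rw [show 2 * (m + 2) = 2 * m + 1 + 3 by ring, mseq, if_pos (by omega),
    show (2 * m + 1 + 3) / 2 = m + 2 by omega]

theorem mseq_two_mul_sub_one {j : ℕ} (hj : 2 ≤ j) :
    mseq A B (2 * j - 1) = mseq A B (aStar (j - 1)) ++ mseq A B j := by
  obtain ⟨m, rfl⟩ := Nat.exists_eq_add_of_le' hj
  rw [show 2 * (m + 2) - 1 = 2 * m + 3 by omega, mseq, if_neg (by omega),
    show (2 * m + 4) / 2 = m + 2 by omega]

theorem Vtrip_two : Vtrip A B 2 = (A, A ++ B, B) := by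
  rw [Vtrip]

theorem Vtrip_two_mul {j : ℕ} (hj : 2 ≤ j) : Vtrip A B (2 * j) = Rop (Vtrip A B j) := by
  obtain ⟨m, rfl⟩ := Nat.exists_eq_add_of_le' hj
  rw [show 2 * (m + 2) = 2 * m + 1 + 3 by ring, Vtrip, if_pos (by omega),
    show (2 * m + 1 + 3) / 2 = m + 2 by omega]

theorem Vtrip_two_mul_sub_one {j : ℕ} (hj : 2 ≤ j) :
    Vtrip A B (2 * j - 1) = Lop (Vtrip A B j) := by
  obtain ⟨m, rfl⟩ := Nat.exists_eq_add_of_le' hj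
  rw [show 2 * (m + 2) - 1 = 2 * m + 3 by omega, Vtrip, if_neg (by omega),
    show (2 * m + 4) / 2 = m + 2 by omega]

/-- The triple `(S(a*(j-1)), S(j), S(a(j)))`, to be identified with `V(j)`: it has the same
initial value at `j = 2` and the same recursion under `L` and `R`. The values at `j = 0` (where
`j - 1` truncates to `0`) and `j = 1` are junk. -/
noncomputable def mseqTriple (j : ℕ) : List α × List α × List α :=
  (mseq A B (aStar (j - 1)), mseq A B j, mseq A B (aseq j))

theorem mseqTriple_two : mseqTriple A B 2 = (A, A ++ B, B) := by
  have aStar_one : aStar 1 = 0 := aStar_two_pow 0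
  have aseq_two : aseq 2 = 1 := by simp [aseq]
  simp [mseqTriple, aStar_one, aseq_two, mseq]

theorem mseqTriple_two_mul {j : ℕ} (hj : 2 ≤ j) :
    mseqTriple A B (2 * j) = Rop (mseqTriple A B j) := by
  simp only [mseqTriple, Rop, aStar_two_mul_sub_one hj, mseq_two_mul A B hj, aseq_two_mul]

theorem mseqTriple_two_mul_sub_one {j : ℕ} (hj : 2 ≤ j) :
    mseqTriple A B (2 * j - 1) = Lop (mseqTriple A B j) := by
  have h_pred : 2 * j - 1 - 1 = 2 * (j - 1) := by omega
  simp only [mseqTriple, Lop, h_pred, aStar_two_mul, mseq_two_mul_sub_one A B hj,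
    aseq_two_mul_sub_one (one_le_two.trans hj)]

end Triples

/-- for every `j ≥ 2`,
`V(j) = (S_{A,B}(a*(j−1)), S_{A,B}(j), S_{A,B}(a(j)))`. -/
theorem stmt4 {α : Type*} (A B : List α) (j : ℕ) (hj : 2 ≤ j) :
    Vtrip A B j = (mseq A B (aStar (j - 1)), mseq A B j, mseq A B (aseq j)) := by
  change Vtrip A B j = mseqTriple A B j
  induction j, hj using two_le_doubling_induction with
  | two => rw [Vtrip_two, mseqTriple_two]
  | two_mul_sub_one j hj ih =>
    rw [Vtrip_two_mul_sub_one A B hj, mseqTriple_two_mul_sub_one A B hj, ih]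
  | two_mul j hj ih => rw [Vtrip_two_mul A B hj, mseqTriple_two_mul A B hj, ih]
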